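/- Suppose dim V = 3 and the contact metric algebraic relations h∘φ = −φ∘h and tr(h) = 0 hold, and suppose there exists a unit vector X orthogonal to ξ with hX = λX for some λ ≠ 0. If two families of coefficients give the same curvature tensor, i.e. f₁R₁ + f₂R₂ + f₃R₃ + f₄R₄ + f₅R₅ + f₆R₆ = f₁*R₁ + f₂*R₂ + f₃*R₃ + f₄*R₄ + f₅*R₅ + f₆*R₆ as tensors on V, then f₁* − f₁ = f₃* − f₃, f₂* − f₂ = −(f₁* − f₁)/3, and f₄* − f₄ = f₆* − f₆. (Thus the writing of the curvature tensor of a 3-dimensional contact metric generalized (κ,μ)-space form is unique only up to these relations.) -/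

import Mathlib

open RealInnerProductSpace

variable {V : Type*} [NormedAddCommGroup V] [InnerProductSpace ℝ V]

/-- R₁(X,Y)Z = ⟨Y,Z⟩X − ⟨X,Z⟩Y -/
noncomputable def R1 (X Y Z : V) : V := ⟪Y, Z⟫ • X - ⟪X, Z⟫ • Y

/-- R₂(X,Y)Z = ⟨X,φZ⟩φY − ⟨Y,φZ⟩φX + 2⟨X,φY⟩φZ -/
noncomputable def R2 (φ : V →ₗ[ℝ] V) (X Y Z : V) : V :=
  ⟪X, φ Z⟫ • φ Y - ⟪Y, φ Z⟫ • φ X + (2 * ⟪X, φ Y⟫) • φ Z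

/-- R₃(X,Y)Z = η(X)η(Z)Y − η(Y)η(Z)X + ⟨X,Z⟩η(Y)ξ − ⟨Y,Z⟩η(X)ξ, where η(X) = ⟨X,ξ⟩ -/
noncomputable def R3 (ξ : V) (X Y Z : V) : V :=
  (⟪X, ξ⟫ * ⟪Z, ξ⟫) • Y - (⟪Y, ξ⟫ * ⟪Z, ξ⟫) • X
    + (⟪X, Z⟫ * ⟪Y, ξ⟫) • ξ - (⟪Y, Z⟫ * ⟪X, ξ⟫) • ξ

/-- R₄(X,Y)Z = ⟨Y,Z⟩hX − ⟨X,Z⟩hY + ⟨hY,Z⟩X − ⟨hX,Z⟩Y -/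
noncomputable def R4 (h : V →ₗ[ℝ] V) (X Y Z : V) : V :=
  ⟪Y, Z⟫ • h X - ⟪X, Z⟫ • h Y + ⟪h Y, Z⟫ • X - ⟪h X, Z⟫ • Y

/-- R₅(X,Y)Z = ⟨hY,Z⟩hX − ⟨hX,Z⟩hY + ⟨φhX,Z⟩φhY − ⟨φhY,Z⟩φhX -/
noncomputable def R5 (φ h : V →ₗ[ℝ] V) (X Y Z : V) : V :=
  ⟪h Y, Z⟫ • h X - ⟪h X, Z⟫ • h Y
    + ⟪φ (h X), Z⟫ • φ (h Y) - ⟪φ (h Y), Z⟫ • φ (h X)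

/-- R₆(X,Y)Z = η(X)η(Z)hY − η(Y)η(Z)hX + ⟨hX,Z⟩η(Y)ξ − ⟨hY,Z⟩η(X)ξ -/
noncomputable def R6 (ξ : V) (h : V →ₗ[ℝ] V) (X Y Z : V) : V :=
  (⟪X, ξ⟫ * ⟪Z, ξ⟫) • h Y - (⟪Y, ξ⟫ * ⟪Z, ξ⟫) • h X
    + (⟪h X, Z⟫ * ⟪Y, ξ⟫) • ξ - (⟪h Y, Z⟫ * ⟪X, ξ⟫) • ξ

/-- R = f₁R₁ + f₂R₂ + f₃R₃ + f₄R₄ + f₅R₅ + f₆R₆ -/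
noncomputable def Rc (φ h : V →ₗ[ℝ] V) (ξ : V) (f₁ f₂ f₃ f₄ f₅ f₆ : ℝ) (X Y Z : V) : V :=
  f₁ • R1 X Y Z + f₂ • R2 φ X Y Z + f₃ • R3 ξ X Y Z + f₄ • R4 h X Y Z
    + f₅ • R5 φ h X Y Z + f₆ • R6 ξ h X Y Z

/-- R(X,Y,Z,W) = ⟨R(X,Y)Z, W⟩ -/
noncomputable def Rq (φ h : V →ₗ[ℝ] V) (ξ : V) (f₁ f₂ f₃ f₄ f₅ f₆ : ℝ) (X Y Z W : V) : ℝ :=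
  ⟪Rc φ h ξ f₁ f₂ f₃ f₄ f₅ f₆ X Y Z, W⟫

/-!
Two pieces of the curvature tensor suffice. The Jacobi operator of the Reeb vector
is `R(X, ξ)ξ = (f₁ - f₃)(-φ²X) + (f₄ - f₆)hX`. Since `φ` commutes with `-φ²` and anticommutes with
`h`, the two parts separate, so when `h ≠ 0` the tensor determines `f₁ - f₃` and `f₄ - f₆`. On a
`φ`-section, `⟨R(X, φX)φX, X⟩ = (f₁ + 3f₂)‖X‖⁴`, because anticommutation makes the contributions of
`h` cancel; this determines `f₁ + 3f₂`.
-/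

/-- An almost contact metric structure on a real inner product space: an endomorphism `φ` and a unit
Reeb vector `ξ` making `φ` a compatible complex structure on the hyperplane `ξᗮ`. The dual form
`η` is encoded as `⟪·, ξ⟫`. -/
structure IsAlmostContactMetric (φ : V →ₗ[ℝ] V) (ξ : V) : Prop where
  norm_reeb : ‖ξ‖ = 1
  map_map : ∀ X : V, φ (φ X) = -X + ⟪X, ξ⟫ • ξ
  inner_map_map : ∀ X Y : V, ⟪φ X, φ Y⟫ = ⟪X, Y⟫ - ⟪X, ξ⟫ * ⟪Y, ξ⟫

namespace IsAlmostContactMetric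

variable {φ h : V →ₗ[ℝ] V} {ξ : V}

theorem reeb_ne_zero (hφ : IsAlmostContactMetric φ ξ) : ξ ≠ 0 :=
  norm_ne_zero_iff.mp (by simp [hφ.norm_reeb])

theorem inner_reeb_self (hφ : IsAlmostContactMetric φ ξ) : ⟪ξ, ξ⟫ = 1 := by
  rw [real_inner_self_eq_norm_sq, hφ.norm_reeb, one_pow]

theorem map_reeb (hφ : IsAlmostContactMetric φ ξ) : φ ξ = 0 := by
  rw [← inner_self_eq_zero (𝕜 := ℝ), hφ.inner_map_map, hφ.inner_reeb_self]
  norm_num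

theorem inner_map_reeb (hφ : IsAlmostContactMetric φ ξ) (X : V) : ⟪φ X, ξ⟫ = 0 := by
  have cube : -φ X = -φ X + ⟪φ X, ξ⟫ • ξ := by
    simpa [hφ.map_map X, hφ.map_reeb] using hφ.map_map (φ X)
  exact (smul_eq_zero.mp (left_eq_add.mp cube)).resolve_right hφ.reeb_ne_zero

theorem map_map_map (hφ : IsAlmostContactMetric φ ξ) (X : V) : φ (φ (φ X)) = -φ X := by
  rw [hφ.map_map, hφ.inner_map_reeb, zero_smul, add_zero]

theorem inner_map_left (hφ : IsAlmostContactMetric φ ξ) (X Y : V) :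
    ⟪φ X, Y⟫ = -⟪X, φ Y⟫ := by
  have key := hφ.inner_map_map X (φ Y)
  rw [hφ.map_map, inner_add_right, inner_neg_right, real_inner_smul_right,
    hφ.inner_map_reeb, hφ.inner_map_reeb] at key
  linarith

theorem inner_map_self (hφ : IsAlmostContactMetric φ ξ) (X : V) : ⟪φ X, X⟫ = 0 := by
  have skew := hφ.inner_map_left X X
  rw [real_inner_comm (φ X) X] at skew
  linarith

theorem inner_apply_reeb_of_anticomm (hφ : IsAlmostContactMetric φ ξ) (hhξ : h ξ = 0)
    (hanti : ∀ X, h (φ X) = -φ (h X)) (X : V) : ⟪h X, ξ⟫ = 0 := by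
  have comm : h (φ (φ X)) = φ (φ (h X)) := by rw [hanti, hanti, map_neg, neg_neg]
  have key : -h X = -h X + ⟪h X, ξ⟫ • ξ := by simpa [hφ.map_map, hhξ] using comm
  exact (smul_eq_zero.mp (left_eq_add.mp key)).resolve_right hφ.reeb_ne_zero

theorem Rc_self_reeb_reeb (hφ : IsAlmostContactMetric φ ξ) (hhξ : h ξ = 0)
    (hanti : ∀ X, h (φ X) = -φ (h X)) (f₁ f₂ f₃ f₄ f₅ f₆ : ℝ) (X : V) :
    Rc φ h ξ f₁ f₂ f₃ f₄ f₅ f₆ X ξ ξ = -(f₁ - f₃) • φ (φ X) + (f₄ - f₆) • h X := by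
  simp only [Rc, R1, R2, R3, R4, R5, R6, hφ.map_map, hφ.map_reeb, hφ.inner_reeb_self, hhξ,
    hφ.inner_apply_reeb_of_anticomm hhξ hanti, hφ.inner_map_reeb, map_zero,
    inner_zero_left, inner_zero_right]
  module

theorem inner_R4_self_map_map_self (hφ : IsAlmostContactMetric φ ξ)
    (hanti : ∀ X, h (φ X) = -φ (h X)) {X : V} (hX : ⟪X, ξ⟫ = 0) :
    ⟪R4 h X (φ X) (φ X), X⟫ = 0 := by
  have inner_h_section : ⟪h (φ X), φ X⟫ = -⟪h X, X⟫ := by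
    rw [hanti, inner_neg_left, hφ.inner_map_map, hX, mul_zero, sub_zero]
  have orth : ⟪X, φ X⟫ = 0 := by rw [real_inner_comm, hφ.inner_map_self]
  simp only [R4, inner_add_left, inner_sub_left, real_inner_smul_left, inner_h_section, orth,
    hφ.inner_map_self, hφ.inner_map_map, hX]
  ring

theorem inner_R5_self_map_map_self (hφ : IsAlmostContactMetric φ ξ)
    (hanti : ∀ X, h (φ X) = -φ (h X)) {X : V} (hX : ⟪X, ξ⟫ = 0) :
    ⟪R5 φ h X (φ X) (φ X), X⟫ = 0 := by
  have hξX : ⟪ξ, X⟫ = 0 := by rw [real_inner_comm, hX]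
  have hξφX : ⟪ξ, φ X⟫ = 0 := by rw [real_inner_comm, hφ.inner_map_reeb]
  simp only [R5, hanti, map_neg, hφ.map_map, inner_add_left, inner_sub_left, inner_neg_left,
    real_inner_smul_left, hφ.inner_map_left (h X) X, hφ.inner_map_map, hX, hξX, hξφX]
  ring

theorem Rq_self_map_map_self (hφ : IsAlmostContactMetric φ ξ)
    (hanti : ∀ X, h (φ X) = -φ (h X)) (f₁ f₂ f₃ f₄ f₅ f₆ : ℝ) {X : V} (hX : ⟪X, ξ⟫ = 0) :
    Rq φ h ξ f₁ f₂ f₃ f₄ f₅ f₆ X (φ X) (φ X) X = (f₁ + 3 * f₂) * ‖X‖ ^ 4 := by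
  have hφφX : φ (φ X) = -X := by rw [hφ.map_map, hX, zero_smul, add_zero]
  have hR₁ : ⟪R1 X (φ X) (φ X), X⟫ = ‖X‖ ^ 4 := by
    simp only [R1, inner_sub_left, real_inner_smul_left, hφ.inner_map_map, hX,
      hφ.inner_map_self, real_inner_self_eq_norm_sq]
    ring
  have hR₂ : ⟪R2 φ X (φ X) (φ X), X⟫ = 3 * ‖X‖ ^ 4 := by
    simp only [R2, hφφX, inner_add_left, inner_sub_left, inner_neg_left, inner_neg_right,
      real_inner_smul_left, hφ.inner_map_self, real_inner_self_eq_norm_sq]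
    ring
  have hR₃ : R3 ξ X (φ X) (φ X) = 0 := by simp [R3, hX, hφ.inner_map_reeb]
  have hR₆ : R6 ξ h X (φ X) (φ X) = 0 := by simp [R6, hX, hφ.inner_map_reeb]
  simp only [Rq, Rc, inner_add_left, real_inner_smul_left, hR₁, hR₂, hR₃, hR₆, inner_zero_left,
    hφ.inner_R4_self_map_map_self hanti hX, hφ.inner_R5_self_map_map_self hanti hX]
  ring

theorem map_ne_zero_of_apply_ne_zero (hφ : IsAlmostContactMetric φ ξ) (hhξ : h ξ = 0) {X : V}
    (hX : h X ≠ 0) : φ X ≠ 0 := by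
  intro hφX
  have hXξ : 0 = -X + ⟪X, ξ⟫ • ξ := by simpa [hφX] using hφ.map_map X
  have hhX : h X = 0 := by simpa [hhξ] using congrArg h hXξ
  exact hX hhX

theorem eq_zero_of_smul_map_map_add_smul_eq_zero (hφ : IsAlmostContactMetric φ ξ) (hhξ : h ξ = 0)
    (hanti : ∀ X, h (φ X) = -φ (h X)) (hh : h ≠ 0) {a b : ℝ}
    (hab : ∀ X, a • φ (φ X) + b • h X = 0) : a = 0 ∧ b = 0 := by
  obtain ⟨X, hX⟩ : ∃ X, h X ≠ 0 := DFunLike.ne_iff.mp hh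
  have hφX : φ X ≠ 0 := hφ.map_ne_zero_of_apply_ne_zero hhξ hX
  have image : -(a • φ X) + b • φ (h X) = 0 := by
    simpa [hφ.map_map_map] using congrArg φ (hab X)
  have shift : -(a • φ X) - b • φ (h X) = 0 := by
    simpa [hφ.map_map_map, hanti, sub_eq_add_neg] using hab (φ X)
  have ha : a = 0 := by
    have haX : a • φ X = 0 := by linear_combination (norm := module) (-1 / 2 : ℝ) • (image + shift)
    exact (smul_eq_zero.mp haX).resolve_right hφX
  have hbX : b • h X = 0 := by simpa [ha] using hab X
  exact ⟨ha, (smul_eq_zero.mp hbX).resolve_right hX⟩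

theorem coeff_relations_of_Rc_eq_zero (hφ : IsAlmostContactMetric φ ξ) (hhξ : h ξ = 0)
    (hanti : ∀ X, h (φ X) = -φ (h X)) (hh : h ≠ 0) {f₁ f₂ f₃ f₄ f₅ f₆ : ℝ}
    (hR : ∀ A B C, Rc φ h ξ f₁ f₂ f₃ f₄ f₅ f₆ A B C = 0) :
    f₁ = f₃ ∧ f₂ = -f₁ / 3 ∧ f₄ = f₆ := by
  obtain ⟨h₁₃, h₄₆⟩ := hφ.eq_zero_of_smul_map_map_add_smul_eq_zero hhξ hanti hh fun X =>
    (hφ.Rc_self_reeb_reeb hhξ hanti f₁ f₂ f₃ f₄ f₅ f₆ X).symm.trans (hR X ξ ξ)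
  obtain ⟨X, hX⟩ : ∃ X, h X ≠ 0 := DFunLike.ne_iff.mp hh
  have hφX : ‖φ X‖ ^ 4 ≠ 0 :=
    pow_ne_zero 4 (norm_ne_zero_iff.mpr (hφ.map_ne_zero_of_apply_ne_zero hhξ hX))
  have hsection : (f₁ + 3 * f₂) * ‖φ X‖ ^ 4 = 0 := by
    rw [← hφ.Rq_self_map_map_self hanti f₁ f₂ f₃ f₄ f₅ f₆ (hφ.inner_map_reeb X), Rq, hR,
      inner_zero_left]
  have h₁₂ : f₁ + 3 * f₂ = 0 := (mul_eq_zero.mp hsection).resolve_right hφX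
  exact ⟨by linarith, by linarith, by linarith⟩

end IsAlmostContactMetric

theorem Rc_sub_coeff (φ h : V →ₗ[ℝ] V) (ξ : V) (f₁ f₂ f₃ f₄ f₅ f₆ g₁ g₂ g₃ g₄ g₅ g₆ : ℝ)
    (X Y Z : V) :
    Rc φ h ξ (g₁ - f₁) (g₂ - f₂) (g₃ - f₃) (g₄ - f₄) (g₅ - f₅) (g₆ - f₆) X Y Z =
      Rc φ h ξ g₁ g₂ g₃ g₄ g₅ g₆ X Y Z - Rc φ h ξ f₁ f₂ f₃ f₄ f₅ f₆ X Y Z := by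
  simp only [Rc]
  module

theorem stmt14_general {φ h : V →ₗ[ℝ] V} {ξ : V} (hφ : IsAlmostContactMetric φ ξ)
    (hhξ : h ξ = 0) (hanti : ∀ X, h (φ X) = -φ (h X)) (hh : h ≠ 0)
    {f₁ f₂ f₃ f₄ f₅ f₆ g₁ g₂ g₃ g₄ g₅ g₆ : ℝ}
    (heq : ∀ A B C, Rc φ h ξ f₁ f₂ f₃ f₄ f₅ f₆ A B C = Rc φ h ξ g₁ g₂ g₃ g₄ g₅ g₆ A B C) :
    g₁ - f₁ = g₃ - f₃ ∧ g₂ - f₂ = -(g₁ - f₁) / 3 ∧ g₄ - f₄ = g₆ - f₆ :=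
  hφ.coeff_relations_of_Rc_eq_zero (f₅ := g₅ - f₅) hhξ hanti hh fun A B C => by
    rw [Rc_sub_coeff, heq, sub_self]

theorem stmt14 {V : Type*} [NormedAddCommGroup V] [InnerProductSpace ℝ V]
    [FiniteDimensional ℝ V]
    (φ h : V →ₗ[ℝ] V) (ξ : V)
    (f₁ f₂ f₃ f₄ f₅ f₆ g₁ g₂ g₃ g₄ g₅ g₆ : ℝ)
    (hξ : ‖ξ‖ = 1)
    (hφ2 : ∀ X : V, φ (φ X) = -X + ⟪X, ξ⟫ • ξ)
    (hmet : ∀ X Y : V, ⟪φ X, φ Y⟫ = ⟪X, Y⟫ - ⟪X, ξ⟫ * ⟪Y, ξ⟫)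
    (hsym : ∀ X Y : V, ⟪h X, Y⟫ = ⟪X, h Y⟫)
    (hhξ : h ξ = 0)
    (hdim : Module.finrank ℝ V = 3)
    (hanti : ∀ X : V, h (φ X) = -φ (h X))
    (htr : LinearMap.trace ℝ V h = 0)
    (X : V) (lam : ℝ) (hX1 : ‖X‖ = 1) (hXξ : ⟪X, ξ⟫ = 0)
    (hhX : h X = lam • X) (hlam : lam ≠ 0)
    (heq : ∀ A B C : V,
      Rc φ h ξ f₁ f₂ f₃ f₄ f₅ f₆ A B C = Rc φ h ξ g₁ g₂ g₃ g₄ g₅ g₆ A B C) :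
    g₁ - f₁ = g₃ - f₃ ∧ g₂ - f₂ = -(g₁ - f₁) / 3 ∧ g₄ - f₄ = g₆ - f₆ := by
  have hhX0 : h X ≠ 0 := hhX ▸ smul_ne_zero hlam (norm_ne_zero_iff.mp (by simp [hX1]))
  exact stmt14_general ⟨hξ, hφ2, hmet⟩ hhξ hanti (fun h0 => hhX0 (by simp [h0])) heq
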